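/- arXiv:2307.01625 — 2 statements merged into one kernel-verified Lean document; each statement's English description precedes it below -/
import Mathlib

section
/- Let k ≥ 1 and M with 0 ≤ M ≤ k be integers. Then a_{k,M}(2,0) = (−1)^{k(k−1)/2} Σ_{l₁=0}^{M} Σ_{l₂=0}^{M} Σ_{t=0}^{2l₁} Σ_{h₁₀+h₁₁+⋯+h₁ₖ = 2l₂+t} Σ_{h₂₁+⋯+h₂ₖ = 2M−(l₁+l₂)} C(M,l₁)·C(M,l₂)·C(2l₁,t)·C(2l₂+t; h₁₀,h₁₁,…,h₁ₖ)·C(2M−l₁−l₂; h₂₁,…,h₂ₖ)·(−1)^{h₁₀}·( ∏_{i=1}^{k} 1/(2k + h₁ᵢ + 2h₂ᵢ − i)! )·∏_{1≤i<j≤k}( h₁ⱼ + 2h₂ⱼ − h₁ᵢ − 2h₂ᵢ − j + i ), the sums being over nonnegative integers h₁₀,h₁₁,…,h₁ₖ with sum 2l₂+t and h₂₁,…,h₂ₖ with sum 2M−(l₁+l₂). -/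
open MeasureTheory Finset

noncomputable section

/-- `besselFactor m x = ∑_{j≥0} x^j/(j!·(m+j)!)`, so that for `x ≥ 0` one has
`I_m(2√x) = x^{m/2} · besselFactor m x`, where `I_m` is the modified Bessel function of the
first kind. -/
def besselFactor (m : ℕ) (x : ℝ) : ℝ := ∑' j : ℕ, x ^ j / (j.factorial * (m + j).factorial)

/-- The coefficient `a_{k,M}(2,0)`.  Here
`e^{-x} · det_{k×k}(besselFactor (2hᵢ+i+j-1) x)` is exactly the analytic extension at `x = 0`
of `e^{-x} · x^{-k²/2-2M+l₁+l₂} · det_{k×k}(I_{2hᵢ+i+j-1}(2√x))`, since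
`I_m(2√x) = x^{m/2}·besselFactor m x` and the determinant of the `x^{m/2}` factors contributes
exactly `x^{k²/2 + Σᵢ hᵢ} = x^{k²/2 + 2M - l₁ - l₂}`. -/
def a20 (k M : ℕ) : ℝ :=
  (-1 : ℝ) ^ (k * (k - 1) / 2) *
    ∑ l₁ ∈ Finset.range (M + 1), ∑ l₂ ∈ Finset.range (M + 1), ∑ t ∈ Finset.range (2 * l₁ + 1),
      ∑ h ∈ (Fintype.piFinset fun _ : Fin k => Finset.range (2 * M + 1)).filter
          (fun h => (∑ i, h i) + l₁ + l₂ = 2 * M),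
        (M.choose l₁ : ℝ) * (M.choose l₂ : ℝ) * ((2 * l₁).choose t : ℝ) *
          (Nat.multinomial Finset.univ h : ℝ) *
          iteratedDeriv (2 * l₂ + t)
            (fun x : ℝ => Real.exp (-x) *
              (Matrix.of fun i j : Fin k =>
                besselFactor (2 * h i + (i : ℕ) + (j : ℕ) + 1) x).det) 0

lemma bF_summable_aux (R : ℝ) : Summable (fun n : ℕ => (n : ℝ) * R ^ (n - 1) / n.factorial) := by
  rw [← summable_nat_add_iff 1]
  refine (Real.summable_pow_div_factorial R).congr fun n => ?_
  have := Nat.factorial_ne_zero n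
  simp only [Nat.add_sub_cancel, Nat.factorial_succ]
  push_cast
  have h1 : ((n : ℝ) + 1) ≠ 0 := by positivity
  field_simp

lemma bF_hasDerivAt (m : ℕ) (x : ℝ) :
    HasDerivAt (besselFactor m) (besselFactor (m + 1) x) x := by
  set R : ℝ := |x| + 1 with hR
  have hR0 : 0 < R := by positivity
  have key := hasDerivAt_tsum_of_isPreconnected (𝕜 := ℝ) (F := ℝ)
    (g := fun (j : ℕ) (y : ℝ) => y ^ j / ((j.factorial : ℝ) * ((m + j).factorial : ℝ)))
    (g' := fun (j : ℕ) (y : ℝ) =>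
      ((j : ℝ) * y ^ (j - 1)) / ((j.factorial : ℝ) * ((m + j).factorial : ℝ)))
    (t := Metric.ball (0 : ℝ) R) (y₀ := 0) (y := x)
    (bF_summable_aux R) Metric.isOpen_ball (convex_ball (0 : ℝ) R).isPreconnected
    (fun n y _ => (hasDerivAt_pow n y).div_const _) ?_ (by simpa using hR0) ?_
    (by simp [hR])
  · have h2 : (∑' j : ℕ, ((j : ℝ) * x ^ (j - 1)) / ((j.factorial : ℝ) * ((m + j).factorial : ℝ)))
        = besselFactor (m + 1) x := by
      unfold besselFactor
      have h0 : Summable (fun j : ℕ =>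
          ((j : ℝ) * x ^ (j - 1)) / ((j.factorial : ℝ) * ((m + j).factorial : ℝ))) := by
        refine Summable.of_norm_bounded (bF_summable_aux |x|) fun n => ?_
        rw [norm_div, norm_mul, norm_pow, norm_mul]
        simp only [Real.norm_eq_abs, Nat.abs_cast]
        apply div_le_div_of_nonneg_left (by positivity) (by positivity)
        have : (1 : ℝ) ≤ ((m + n).factorial : ℝ) := by
          exact_mod_cast Nat.factorial_pos (m + n)
        nlinarith [show (0 : ℝ) < n.factorial by exact_mod_cast Nat.factorial_pos n]
      rw [h0.tsum_eq_zero_add]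
      simp only [Nat.cast_zero, zero_mul, zero_div, zero_add, Nat.add_sub_cancel]
      congr 1
      ext j
      rw [show m + (j + 1) = m + 1 + j by ring, Nat.factorial_succ j]
      have h1 : ((j : ℝ) + 1) ≠ 0 := by positivity
      have h3 : (j.factorial : ℝ) ≠ 0 := by exact_mod_cast Nat.factorial_ne_zero j
      have h4 : ((m + 1 + j).factorial : ℝ) ≠ 0 := by
        exact_mod_cast Nat.factorial_ne_zero (m + 1 + j)
      push_cast
      field_simp
    rw [← h2]
    exact key
  · intro n y hy
    have hy' : |y| ≤ R := by
      have := mem_ball_zero_iff.mp hy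
      exact le_of_lt this
    rw [norm_div, norm_mul, norm_pow, norm_mul]
    simp only [Real.norm_eq_abs, Nat.abs_cast]
    have : (1 : ℝ) ≤ ((m + n).factorial : ℝ) := by
      exact_mod_cast Nat.factorial_pos (m + n)
    have hn : (0 : ℝ) < n.factorial := by exact_mod_cast Nat.factorial_pos n
    apply div_le_div₀ (by positivity) _ hn (by nlinarith)
    gcongr
  · refine summable_of_ne_finset_zero (s := {0}) fun j hj => ?_
    have : j ≠ 0 := by simpa using hj
    simp [this]

lemma bF_iter (m n : ℕ) : iteratedDeriv n (besselFactor m) = besselFactor (m + n) := by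
  induction n with
  | zero => simp
  | succ n ih =>
    rw [iteratedDeriv_succ, ih]
    ext x
    exact (bF_hasDerivAt (m + n) x).deriv

lemma bF_contDiff (m : ℕ) (n : ℕ) : ContDiff ℝ n (besselFactor m) := by
  induction n generalizing m with
  | zero =>
    simp only [Nat.cast_zero, contDiff_zero]
    exact continuous_iff_continuousAt.2 fun x => (bF_hasDerivAt m x).continuousAt
  | succ n ih =>
    rw [Nat.cast_succ, contDiff_succ_iff_deriv]
    refine ⟨fun x => (bF_hasDerivAt m x).differentiableAt, by simp, ?_⟩
    have : deriv (besselFactor m) = besselFactor (m + 1) :=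
      funext fun x => (bF_hasDerivAt m x).deriv
    rw [this]
    exact ih _

lemma bF_zero (m : ℕ) : besselFactor m 0 = 1 / (m.factorial : ℝ) := by
  unfold besselFactor
  rw [tsum_eq_single 0]
  · simp
  · intro j hj
    simp [hj]

lemma exp_neg_iter (n : ℕ) : iteratedDeriv n (fun x : ℝ => Real.exp (-x)) 0 = (-1) ^ n := by
  have h := iteratedDeriv_comp_neg n Real.exp (0 : ℝ)
  rw [h, iteratedDeriv_eq_iterate, Real.iter_deriv_exp]
  simp

lemma iter_prod {ι : Type*} [DecidableEq ι] (s : Finset ι) (f : ι → ℝ → ℝ)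
    (hf : ∀ i, ∀ n : ℕ, ContDiff ℝ n (f i)) (n : ℕ) (x : ℝ) :
    iteratedDeriv n (fun y => ∏ i ∈ s, f i y) x =
      ∑ h ∈ Finset.piAntidiag s n, (Nat.multinomial s h : ℝ) *
        ∏ i ∈ s, iteratedDeriv (h i) (f i) x := by
  induction s using Finset.cons_induction generalizing n with
  | empty =>
    rcases n with _ | n
    · simp
    · simp [iteratedDeriv_const]
  | cons a s ha ih =>
    simp only [Finset.prod_cons]
    rw [iteratedDeriv_fun_mul (hf a n).contDiffAt
      (contDiff_prod (fun i _ => hf i n)).contDiffAt, Finset.piAntidiag_cons,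
      Finset.sum_disjiUnion, Finset.Nat.sum_antidiagonal_eq_sum_range_succ_mk]
    refine Finset.sum_congr rfl fun p hp => ?_
    rw [Finset.sum_map, ih, Finset.mul_sum]
    refine Finset.sum_congr rfl fun h hh => ?_
    rw [Finset.mem_piAntidiag] at hh
    have h0 : h a = 0 := by
      by_contra h1
      exact ha (hh.2 a h1)
    have hs : ∀ i ∈ s, (h + fun t => if t = a then p else 0) i = h i := by
      intro i hi
      have : i ≠ a := fun e => ha (e ▸ hi)
      simp [this]
    simp only [addRightEmbedding_apply]
    rw [Nat.multinomial_cons, Nat.multinomial_congr hs, Finset.sum_congr rfl hs, hh.1]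
    have h4 : ∏ i ∈ s, iteratedDeriv ((h + fun t => if t = a then p else 0) i) (f i) x =
        ∏ i ∈ s, iteratedDeriv (h i) (f i) x :=
      Finset.prod_congr rfl (fun i hi => by rw [hs i hi])
    rw [h4]
    have h2 : (h + fun t => if t = a then p else 0) a = p := by simp [h0]
    rw [h2]
    have h3 : p + (n - p) = n := by
      have := Finset.mem_range.1 hp
      omega
    rw [h3]
    push_cast
    ring

lemma filter_eq_piAntidiag (k n : ℕ) :
    (Fintype.piFinset fun _ : Fin k => Finset.range (n + 1)).filter
      (fun h => ∑ i, h i = n) = Finset.piAntidiag Finset.univ n := by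
  ext h
  simp only [Finset.mem_filter, Fintype.mem_piFinset, Finset.mem_range, Finset.mem_piAntidiag,
    Finset.mem_univ, implies_true, and_true, and_iff_right_iff_imp]
  intro hs i
  have := Finset.single_le_sum (f := h) (fun i _ => Nat.zero_le _) (Finset.mem_univ i)
  omega

lemma iter_det (k n : ℕ) (m : Fin k → Fin k → ℕ) :
    iteratedDeriv n (fun x : ℝ => Real.exp (-x) *
        (Matrix.of fun i j : Fin k => besselFactor (m i j) x).det) 0 =
      ∑ h ∈ Finset.piAntidiag (Finset.univ : Finset (Fin (k + 1))) n,
        (Nat.multinomial Finset.univ h : ℝ) * (-1 : ℝ) ^ (h 0) *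
          (Matrix.of fun i j : Fin k => 1 / ((m i j + h i.succ).factorial : ℝ)).det := by
  let F : Equiv.Perm (Fin k) → Fin (k + 1) → ℝ → ℝ := fun σ =>
    Fin.cons (fun x => Real.exp (-x)) (fun i => besselFactor (m i (σ i)))
  have hF : ∀ σ i, ∀ n : ℕ, ContDiff ℝ n (F σ i) := by
    intro σ i n
    refine Fin.cases ?_ (fun i => ?_) i
    · simp only [F, Fin.cons_zero]
      fun_prop
    · simp only [F, Fin.cons_succ]
      exact bF_contDiff _ _
  have h1 : (fun x : ℝ => Real.exp (-x) *
        (Matrix.of fun i j : Fin k => besselFactor (m i j) x).det) =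
      fun x => ∑ σ : Equiv.Perm (Fin k),
        ((Equiv.Perm.sign σ : ℤ) : ℝ) * ∏ i ∈ (Finset.univ : Finset (Fin (k + 1))), F σ i x := by
    ext x
    rw [← Matrix.det_transpose, Matrix.det_apply', Finset.mul_sum]
    refine Finset.sum_congr rfl fun σ _ => ?_
    rw [Fin.prod_univ_succ]
    simp only [F, Fin.cons_zero, Fin.cons_succ, Matrix.transpose_apply, Matrix.of_apply]
    ring
  rw [h1, iteratedDeriv_fun_sum]
  · simp only [iteratedDeriv_const_mul_field]
    simp_rw [iter_prod _ _ (hF _), Finset.mul_sum]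
    rw [Finset.sum_comm]
    refine Finset.sum_congr rfl fun h _ => ?_
    rw [← Matrix.det_transpose, Matrix.det_apply', Finset.mul_sum]
    refine Finset.sum_congr rfl fun σ _ => ?_
    rw [Fin.prod_univ_succ]
    simp only [F, Fin.cons_zero, Fin.cons_succ, Matrix.transpose_apply, Matrix.of_apply,
      exp_neg_iter, bF_iter, bF_zero]
    ring
  · intro σ _
    exact (contDiff_const.mul (contDiff_prod (fun i _ => hF σ i n))).contDiffAt

lemma det_fact (k : ℕ) (v : Fin k → ℕ) (hv : ∀ i, k ≤ v i + 1) :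
    (Matrix.of fun i j : Fin k => 1 / ((v i - (j : ℕ)).factorial : ℝ)).det =
      (∏ i, 1 / ((v i).factorial : ℝ)) *
        ∏ i : Fin k, ∏ j ∈ Finset.Ioi i, ((v j : ℝ) - (v i : ℝ)) := by
  rw [← Matrix.det_vandermonde (fun i => (v i : ℝ)),
    Matrix.det_eval_matrixOfPolynomials_eq_det_vandermonde (fun i => (v i : ℝ))
      (fun j => descPochhammer ℝ (j : ℕ)) (fun i => descPochhammer_natDegree ℝ i)
      (fun i => monic_descPochhammer ℝ i), ← Matrix.det_mul_column]
  congr 1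
  ext i j
  simp only [Matrix.of_apply]
  rw [descPochhammer_eval_eq_descFactorial]
  have hj : (j : ℕ) ≤ v i := by
    have := hv i
    have := j.2
    omega
  have := Nat.factorial_mul_descFactorial hj
  rw [← this]
  have h1 := Nat.factorial_ne_zero (v i - j)
  have h2 : (v i).descFactorial j ≠ 0 := by
    rw [Ne, Nat.descFactorial_eq_zero_iff_lt]
    omega
  push_cast
  field_simp

lemma prod_pairs (k : ℕ) (g : Fin k → Fin k → ℝ) :
    ∏ p ∈ Finset.univ.filter (fun p : Fin k × Fin k => p.1 < p.2), g p.1 p.2 =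
      ∏ i : Fin k, ∏ j ∈ Finset.Ioi i, g i j := by
  rw [Finset.prod_filter, Fintype.prod_prod_type]
  refine Finset.prod_congr rfl fun i _ => ?_
  rw [← Finset.prod_filter]
  congr 1
  ext j
  simp

lemma multinomial_rev (k : ℕ) (h : Fin k → ℕ) :
    Nat.multinomial Finset.univ (fun i => h (Fin.rev i)) = Nat.multinomial Finset.univ h := by
  unfold Nat.multinomial
  congr 1
  · congr 1
    exact Equiv.sum_comp Fin.revPerm h
  · exact Equiv.prod_comp Fin.revPerm (fun i => (h i).factorial)

/-- **Theorem (explicit combinatorial formula for `a_{k,M}(2,0)`).**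
In the products below, `i,j` run over `1,…,k` (realised as `Fin k`, the `1`-based index
being `i+1`); `h₁` is indexed by `0,1,…,k` (realised as `Fin (k+1)`, with `h₁ᵢ = h₁ i.succ`
for `i = 1,…,k`) and `h₂` by `1,…,k`.  Note `−j+i` (1-based) equals `−(p.2) + p.1`
(0-based). -/
theorem a20_explicit (k M : ℕ) (hk : 1 ≤ k) (hM : M ≤ k) :
    a20 k M =
      (-1 : ℝ) ^ (k * (k - 1) / 2) *
        ∑ l₁ ∈ Finset.range (M + 1), ∑ l₂ ∈ Finset.range (M + 1), ∑ t ∈ Finset.range (2 * l₁ + 1),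
          ∑ h₁ ∈ (Fintype.piFinset fun _ : Fin (k + 1) => Finset.range (2 * l₂ + t + 1)).filter
              (fun h₁ => ∑ i, h₁ i = 2 * l₂ + t),
            ∑ h₂ ∈ (Fintype.piFinset fun _ : Fin k => Finset.range (2 * M + 1)).filter
                (fun h₂ => (∑ i, h₂ i) + l₁ + l₂ = 2 * M),
              (M.choose l₁ : ℝ) * (M.choose l₂ : ℝ) * ((2 * l₁).choose t : ℝ) *
                (Nat.multinomial Finset.univ h₁ : ℝ) * (Nat.multinomial Finset.univ h₂ : ℝ) *
                (-1 : ℝ) ^ (h₁ 0) *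
                (∏ i : Fin k,
                  (1 : ℝ) / ((2 * k + h₁ i.succ + 2 * h₂ i - ((i : ℕ) + 1)).factorial : ℝ)) *
                ∏ p ∈ Finset.univ.filter (fun p : Fin k × Fin k => p.1 < p.2),
                  ((((h₁ p.2.succ : ℤ) + 2 * (h₂ p.2 : ℤ) - (h₁ p.1.succ : ℤ) - 2 * (h₂ p.1 : ℤ)
                      - ((p.2 : ℕ) : ℤ) + ((p.1 : ℕ) : ℤ)) : ℤ) : ℝ) := by
  unfold a20
  congr 1
  refine Finset.sum_congr rfl fun l₁ _ => Finset.sum_congr rfl fun l₂ _ =>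
    Finset.sum_congr rfl fun t _ => ?_
  rw [Finset.sum_comm]
  symm
  refine Finset.sum_equiv (Equiv.arrowCongr (Fin.revPerm (n := k)) (Equiv.refl ℕ)) ?_ ?_
  · intro h
    have hs : ∑ i, h (Fin.rev i) = ∑ i, h i := Equiv.sum_comp Fin.revPerm h
    simp only [Finset.mem_filter, Fintype.mem_piFinset, Equiv.arrowCongr_apply,
      Function.comp, Equiv.refl_apply, Fin.revPerm_symm, Fin.revPerm_apply, hs]
    refine and_congr_left fun _ => ⟨fun H i => H _, fun H i => ?_⟩
    simpa using H (Fin.rev i)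
  · intro h _
    have e : (Equiv.arrowCongr (Fin.revPerm (n := k)) (Equiv.refl ℕ)) h =
        fun i => h (Fin.rev i) := by
      ext i
      simp [Equiv.arrowCongr_apply]
    rw [e, multinomial_rev]
    have hd : ∀ x : ℝ, (Matrix.of fun i j : Fin k =>
        besselFactor (2 * h (Fin.rev i) + (i : ℕ) + (j : ℕ) + 1) x).det =
        (Matrix.of fun i j : Fin k =>
          besselFactor (2 * h i + (Fin.rev i : ℕ) + (Fin.rev j : ℕ) + 1) x).det := by
      intro x
      rw [← Matrix.det_submatrix_equiv_self (Fin.revPerm (n := k))]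
      congr 1
      ext i j
      simp
    simp only [hd]
    rw [iter_det, filter_eq_piAntidiag, Finset.mul_sum]
    refine Finset.sum_congr rfl fun h₁ _ => ?_
    have hm : (Matrix.of fun i j : Fin k => 1 / (((2 * h i + (Fin.rev i : ℕ) + (Fin.rev j : ℕ) + 1)
        + h₁ i.succ).factorial : ℝ)) = Matrix.of fun i j : Fin k =>
          1 / (((2 * k + h₁ i.succ + 2 * h i - ((i : ℕ) + 1)) - (j : ℕ)).factorial : ℝ) := by
      ext i j
      simp only [Matrix.of_apply, Fin.val_rev]
      have := i.2
      have := j.2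
      congr 3
      omega
    rw [hm, det_fact k (fun i => 2 * k + h₁ i.succ + 2 * h i - ((i : ℕ) + 1))
      (fun i => by have := i.2; omega), ← prod_pairs]
    have hp : ∀ p : Fin k × Fin k,
        ((2 * k + h₁ p.2.succ + 2 * h p.2 - ((p.2 : ℕ) + 1) : ℕ) : ℝ) -
        ((2 * k + h₁ p.1.succ + 2 * h p.1 - ((p.1 : ℕ) + 1) : ℕ) : ℝ) =
        ((((h₁ p.2.succ : ℤ) + 2 * (h p.2 : ℤ) - (h₁ p.1.succ : ℤ) - 2 * (h p.1 : ℤ)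
                      - ((p.2 : ℕ) : ℤ) + ((p.1 : ℕ) : ℤ)) : ℤ) : ℝ) := by
      intro p
      have := p.1.2
      have := p.2.2
      rw [Nat.cast_sub (by omega), Nat.cast_sub (by omega)]
      push_cast
      ring
    simp only [hp]
    ring
end
end

section
/- Let n ≥ 0 and k ≥ 1 be integers, let N be a complex number, and let w₁,…,w_k be complex numbers. Then for every complex α with α ≠ w_i for all i, the n-th derivative with respect to α satisfies (d/dα)^{n} [ e^{−Nα/2} / ∏_{i=1}^{k}(w_i − α) ] = [ e^{−Nα/2} / ∏_{i=1}^{k}(w_i − α) ] · Σ_{m₁+2m₂+⋯+n·mₙ = n} n!/(m₁!⋯mₙ!) · ( −N/2 + Σ_{l=1}^{k} 1/(w_l − α) )^{m₁} · ∏_{j=2}^{n} ( (1/j)·Σ_{l=1}^{k} 1/(w_l − α)^{j} )^{m_j}, the sum being over all tuples (m₁,…,mₙ) of nonnegative integers with m₁+2m₂+⋯+n·mₙ = n. -/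
open Finset

noncomputable section

open Polynomial in
lemma aux_E (n : ℕ) (c : ℂ) (j : ℕ) : (X : ℂ[X]) ^ n ∣
    derivative (∑ m ∈ range (n+1), monomial ((j+1)*m) (c^m / (m.factorial : ℂ)))
     - (monomial j (((j:ℂ)+1) * c)) * (∑ m ∈ range (n+1), monomial ((j+1)*m) (c^m / (m.factorial : ℂ))) := by
  rw [derivative_sum, Finset.sum_range_succ', Finset.sum_range_succ (n := n), mul_add, Finset.mul_sum]
  have h : ∀ m ∈ range n, derivative (monomial ((j+1)*(m+1)) (c^(m+1) / ((m+1).factorial : ℂ)))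
      = monomial j (((j:ℂ)+1) * c) * monomial ((j+1)*m) (c^m / (m.factorial : ℂ)) := by
    intro m _
    rw [derivative_monomial, monomial_mul_monomial]
    have h1 : (j+1)*(m+1) - 1 = j + (j+1)*m := by
      have : (j+1)*(m+1) = j + (j+1)*m + 1 := by ring
      omega
    rw [h1]
    congr 1
    have : (m.factorial : ℂ) ≠ 0 := by exact_mod_cast m.factorial_ne_zero
    have h3 : (m : ℂ) + 1 ≠ 0 := by exact_mod_cast m.succ_ne_zero
    rw [Nat.factorial_succ]
    push_cast
    field_simp
    ring
  rw [Finset.sum_congr rfl h, monomial_mul_monomial, derivative_monomial]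
  have h4 : n ≤ j + (j+1)*n := by nlinarith
  simp only [mul_zero, Nat.cast_zero, map_zero, add_zero, sub_add_cancel_left]
  rw [dvd_neg, ← C_mul_X_pow_eq_monomial]
  exact (pow_dvd_pow _ h4).mul_left _

open Polynomial in
lemma aux_prod (n : ℕ) {ι : Type*} [DecidableEq ι] (s : Finset ι) (E g : ι → ℂ[X])
    (h : ∀ j, (X : ℂ[X]) ^ n ∣ derivative (E j) - g j * E j) :
    (X : ℂ[X]) ^ n ∣ derivative (∏ j ∈ s, E j) - (∑ j ∈ s, g j) * ∏ j ∈ s, E j := by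
  induction s using Finset.induction_on with
  | empty => simp
  | insert a s ha ih =>
    rw [Finset.prod_insert ha, Finset.sum_insert ha, derivative_mul]
    have : derivative (E a) * ∏ j ∈ s, E j + E a * derivative (∏ j ∈ s, E j)
        - (g a + ∑ j ∈ s, g j) * (E a * ∏ j ∈ s, E j)
      = (derivative (E a) - g a * E a) * ∏ j ∈ s, E j
        + E a * (derivative (∏ j ∈ s, E j) - (∑ j ∈ s, g j) * ∏ j ∈ s, E j) := by ring
    rw [this]
    exact dvd_add ((h a).mul_right _) (ih.mul_left _)

open Polynomial in
lemma aux_rec (n : ℕ) (x : ℕ → ℂ) (a : ℕ → ℂ)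
    (ha : ∀ l, a (l+1) = ∑ i ∈ range (l+1), (l.choose i : ℂ) *
      ((i.factorial : ℂ) * (((i:ℂ)+1) * x i)) * a (l - i)) :
    a n = a 0 * ∑ m ∈ (Fintype.piFinset fun _ : Fin n => Finset.range (n + 1)).filter
            (fun m => ∑ j : Fin n, ((j : ℕ) + 1) * m j = n),
          ((n.factorial : ℂ) / ∏ j, ((m j).factorial : ℂ)) * ∏ j : Fin n, x j ^ (m j) := by
  set E : Fin n → ℂ[X] := fun j =>
    ∑ m ∈ range (n+1), monomial (((j:ℕ)+1)*m) (x j^m / (m.factorial : ℂ)) with hE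
  set F : ℂ[X] := ∏ j, E j with hF
  have hd := aux_prod n Finset.univ E (fun j => monomial (j:ℕ) (((j:ℕ):ℂ)+1) * C (x j)) (by
    intro j
    have := aux_E n (x j) j
    rw [monomial_mul_C]
    exact this)
  have hprod : ∀ (e : Fin n → ℕ) (c : Fin n → ℂ),
      ∏ j, (monomial (e j) (c j) : ℂ[X]) = monomial (∑ j, e j) (∏ j, c j) := by
    intro e c
    simp only [← C_mul_X_pow_eq_monomial, Finset.prod_mul_distrib, Finset.prod_pow_eq_pow_sum,
      map_prod]
  have hFe : ∀ l, F.coeff l = ∑ m ∈ (Fintype.piFinset fun _ : Fin n => Finset.range (n + 1)).filter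
            (fun m => ∑ j : Fin n, ((j : ℕ) + 1) * m j = l),
            ∏ j : Fin n, (x j ^ (m j) / ((m j).factorial : ℂ)) := by
    intro l
    rw [hF, hE, Finset.prod_univ_sum, finsetSum_coeff, Finset.sum_filter]
    refine Finset.sum_congr rfl fun m _ => ?_
    rw [hprod, coeff_monomial]
  have key : ∀ l, l ≤ n → a l = a 0 * ((l.factorial : ℂ) * F.coeff l) := by
    intro l
    induction l using Nat.strong_induction_on with
    | _ l ih =>
    intro hl
    rcases l with _ | l
    · have : F.coeff 0 = 1 := by
        rw [hFe, Finset.sum_eq_single (fun _ => 0)]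
        · simp
        · intro m hm hne
          exfalso
          apply hne
          funext j
          have := (Finset.mem_filter.1 hm).2
          rw [Finset.sum_eq_zero_iff] at this
          simpa using this j (Finset.mem_univ _)
        · intro h
          exfalso; apply h
          simp
      simp [this]
    · have hc := (X_pow_dvd_iff.1 hd) l (by omega)
      rw [coeff_sub, coeff_derivative, sub_eq_zero] at hc
      have hG : ∀ i, i < n → (∑ j : Fin n, (monomial (j:ℕ) (((j:ℕ):ℂ)+1) * C (x j))).coeff i
          = ((i:ℂ)+1) * x i := by
        intro i hi
        rw [finsetSum_coeff, Finset.sum_eq_single (⟨i, hi⟩ : Fin n)]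
        · simp [monomial_mul_C]
        · intro b _ hb
          rw [monomial_mul_C, coeff_monomial, if_neg]
          intro h; apply hb; ext; exact h
        · simp
      rw [coeff_mul, Finset.Nat.sum_antidiagonal_eq_sum_range_succ_mk] at hc
      have e1 : a 0 * (((l+1).factorial : ℂ) * F.coeff (l+1))
          = a 0 * ((l.factorial : ℂ) * (F.coeff (l+1) * ((l:ℂ)+1))) := by
        rw [Nat.factorial_succ]; push_cast; ring
      rw [e1, hc, ha, Finset.mul_sum, Finset.mul_sum]
      refine Finset.sum_congr rfl fun i hi => ?_
      have hi' : i ≤ l := by have := Finset.mem_range.1 hi; omega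
      rw [ih (l-i) (by omega) (by omega)]
      simp only []
      rw [hG i (by omega), ← Nat.choose_mul_factorial_mul_factorial hi']
      push_cast
      ring
  rw [key n le_rfl, hFe, Finset.mul_sum]
  congr 1
  refine Finset.sum_congr rfl fun m _ => ?_
  rw [Finset.prod_div_distrib]
  ring

lemma aux_g (k : ℕ) (N : ℂ) (w : Fin k → ℂ) (i : ℕ) : ∀ (α : ℂ) (_ : ∀ i, α ≠ w i),
    iteratedDeriv i (fun z : ℂ => -N / 2 + ∑ l, 1 / (w l - z)) α =
      (if i = 0 then -N/2 else 0) + (i.factorial : ℂ) * ∑ l, 1 / (w l - α)^(i+1) := by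
  induction i with
  | zero => intro α _; simp
  | succ i ih =>
    intro α hα
    have hev : ∀ᶠ z in nhds α, ∀ i, z ≠ w i := by
      rw [Filter.eventually_all]
      exact fun i => isOpen_ne.mem_nhds (hα i)
    rw [iteratedDeriv_succ, Filter.EventuallyEq.deriv_eq (hev.mono fun z hz => ih z hz)]
    have hd : ∀ l ∈ (Finset.univ : Finset (Fin k)), HasDerivAt (fun z => 1 / (w l - z)^(i+1))
        (((i:ℂ)+1) * (1 / (w l - α)^(i+1+1))) α := by
      intro l _
      have h0 : w l - α ≠ 0 := sub_ne_zero.2 (hα l).symm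
      have h1 := (((hasDerivAt_id α).const_sub (w l)).pow (i+1)).inv (pow_ne_zero _ h0)
      have e : (fun z => 1 / (w l - z)^(i+1)) = ((fun z => w l - id z)^(i+1))⁻¹ := by
        funext z; simp
      rw [e]
      refine h1.congr_deriv ?_
      simp
      field_simp
      ring
    have := ((HasDerivAt.fun_sum hd).const_mul (i.factorial : ℂ)).const_add (if i = 0 then -N/2 else 0)
    rw [this.deriv, ← Finset.mul_sum, Nat.factorial_succ]
    push_cast
    simp
    ring

/-- **Lemma (higher derivatives of `e^{−Nα/2}/∏(wᵢ−α)`).**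
The sum runs over all tuples `(m₁,…,mₙ)` of nonnegative integers (realised as
`m : Fin n → ℕ`, with `m_j = m (j-1)`) such that `m₁ + 2m₂ + ⋯ + n·mₙ = n`.  The factor for
`j = 1` (Lean index `0`) is `(−N/2 + Σ_l 1/(w_l−α))^{m₁}`, and for `j ≥ 2` it is
`((1/j)·Σ_l 1/(w_l−α)^j)^{m_j}`. -/
theorem nth_deriv_exp_over_prod (n k : ℕ) (hk : 1 ≤ k) (N : ℂ) (w : Fin k → ℂ) (α : ℂ)
    (hα : ∀ i, α ≠ w i) :
    iteratedDeriv n (fun z : ℂ => Complex.exp (-N * z / 2) / ∏ i, (w i - z)) α =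
      (Complex.exp (-N * α / 2) / ∏ i, (w i - α)) *
        ∑ m ∈ (Fintype.piFinset fun _ : Fin n => Finset.range (n + 1)).filter
            (fun m => ∑ j : Fin n, ((j : ℕ) + 1) * m j = n),
          ((n.factorial : ℂ) / ∏ j, ((m j).factorial : ℂ)) *
            ∏ j : Fin n,
              (if (j : ℕ) = 0 then -N / 2 + ∑ l, 1 / (w l - α)
                else (1 / ((j : ℕ) + 1) : ℂ) * ∑ l, 1 / (w l - α) ^ ((j : ℕ) + 1)) ^ (m j) := by
  set f : ℂ → ℂ := fun z : ℂ => Complex.exp (-N * z / 2) / ∏ i, (w i - z) with hf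
  set g : ℂ → ℂ := fun z : ℂ => -N / 2 + ∑ l, 1 / (w l - z) with hg
  have hev : ∀ᶠ z in nhds α, ∀ i, z ≠ w i := by
    rw [Filter.eventually_all]
    exact fun i => isOpen_ne.mem_nhds (hα i)
  have hne : ∀ i, w i - α ≠ 0 := fun i => sub_ne_zero.2 (hα i).symm
  have hfC : ∀ m : ℕ, ContDiffAt ℂ m f α := by
    intro m
    refine ContDiffAt.div (by fun_prop) (contDiffAt_prod ?_) (Finset.prod_ne_zero_iff.2 fun i _ => hne i)
    intro i _
    fun_prop
  have hgC : ∀ m : ℕ, ContDiffAt ℂ m g α := by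
    intro m
    refine ContDiffAt.add (by fun_prop) (ContDiffAt.sum ?_)
    intro i _
    exact ContDiffAt.div (by fun_prop) (by fun_prop) (hne i)
  have hderiv : ∀ z, (∀ i, z ≠ w i) → deriv f z = g z * f z := by
    intro z hz
    have hnz : ∀ i, w i - z ≠ 0 := fun i => sub_ne_zero.2 (hz i).symm
    have hp : ∏ i, (w i - z) ≠ 0 := Finset.prod_ne_zero_iff.2 fun i _ => hnz i
    have h1 : HasDerivAt (fun z : ℂ => Complex.exp (-N * z / 2))
        (Complex.exp (-N * z / 2) * (-N / 2)) z := by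
      have := (((hasDerivAt_id z).const_mul (-N)).div_const 2).cexp
      simpa using this
    have h2 : HasDerivAt (fun z : ℂ => ∏ i, (w i - z))
        (∑ i, (∏ j ∈ Finset.univ.erase i, (w j - z)) • (-1 : ℂ)) z :=
      HasDerivAt.fun_finsetProd fun i _ => (hasDerivAt_id z).const_sub (w i)
    have h3 : (∑ i, (∏ j ∈ Finset.univ.erase i, (w j - z)) • (-1 : ℂ))
        = -((∏ i, (w i - z)) * ∑ l, 1 / (w l - z)) := by
      rw [Finset.mul_sum, ← Finset.sum_neg_distrib]
      refine Finset.sum_congr rfl fun i _ => ?_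
      rw [← Finset.mul_prod_erase Finset.univ (fun j => w j - z) (Finset.mem_univ i)]
      have := hnz i
      simp only [smul_eq_mul]
      field_simp
    rw [h3] at h2
    rw [(h1.fun_div h2 hp).deriv]
    simp only [hf, hg]
    field_simp
    ring
  have hmain := aux_rec n (fun j => if j = 0 then -N / 2 + ∑ l, 1 / (w l - α)
                else (1 / ((j : ℕ) + 1) : ℂ) * ∑ l, 1 / (w l - α) ^ ((j : ℕ) + 1))
    (fun l => iteratedDeriv l f α) (by
      intro l
      rw [iteratedDeriv_succ', Filter.EventuallyEq.iteratedDeriv_eq l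
        (show deriv f =ᶠ[nhds α] fun z => g z * f z from hev.mono hderiv),
        iteratedDeriv_fun_mul (hgC l) (hfC l)]
      refine Finset.sum_congr rfl fun i _ => ?_
      congr 2
      rw [aux_g k N w i α hα]
      rcases i with _ | i
      · simp
      · have h3 : ((i+1 : ℕ) : ℂ) + 1 ≠ 0 := by exact_mod_cast (i+1).succ_ne_zero
        simp only [Nat.succ_ne_zero, if_false, zero_add]
        field_simp)
  simpa only [iteratedDeriv_zero] using hmain
end
end
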